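/- Fix an integer $n \ge 1$. Let $\mathrm{Sym}^n(\mathbb{R}^2)$ be the representation of $SL(2,\mathbb{R})$ on the homogeneous polynomials of degree $n$ in two variables $A, B$ (the standard basis of $\mathbb{R}^2$), in which $u_t = \begin{pmatrix}1&t\\0&1\end{pmatrix}$ maps $p(A,B)$ to $p(A,B+tA)$, with the norm $\bigl\|\sum_{i=0}^n b_i A^{n-i}B^i\bigr\| = \max_{0\le i\le n}|b_i|$. There exists a constant $C>0$ depending only on $n$ such that the following holds. Let $\varepsilon,\eta\in(0,1)$, let $c_0,\dots,c_n$ be real numbers with $|c_i|\le\varepsilon$ for all $0\le i\le n$, put $p=\sum_{i=0}^n c_iA^{n-i}B^i$, and set $T=\eta/\max_{1\le i\le n}|c_i|^{1/i}$, with $T=\infty$ if $c_1=\dots=c_n=0$. Then for every real $t$ with $0\le t\le T$ one has $$u_t\, p=\sum_{k=0}^n\Bigl(\sum_{i=k}^n\binom ik c_it^{i-k}\Bigr)A^{n-k}B^k ,$$ and: (a) if $\varepsilon\le\eta$, then $\bigl|\sum_{i=0}^n c_it^i\bigr|\le C\eta$; (b) for every $k$ with $1\le k\le n$, $\bigl|\sum_{i=k}^n\binom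 ik c_it^{i-k}\bigr|\le C\varepsilon^{1/n}$; (c) (without assuming $\varepsilon\le\eta$) $u_t\,p=w+e$ for some $w\in\mathbb{R}\cdot A^n$, which is fixed by $u_s$ for all $s\in\mathbb{R}$, with $\|w\|\le C\eta$, and some $e\in\mathrm{Sym}^n(\mathbb{R}^2)$ with $\|e\|\le C\varepsilon^{1/n}$. -/

import Mathlib

/-!
The condition `t ≤ T` says that `|c_i| t^i ≤ η^i` for every `i ≥ 1`. This bounds the terms with
`i ≥ 1` of the `A^n`-coefficient of `u_t p` by `η`. For `1 ≤ k ≤ i` it bounds the terms of the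
`A^(n-k) B^k`-coefficient, because

  `(|c_i| t^(i-k))^i = |c_i|^k (|c_i| t^i)^(i-k) ≤ ε^k ≤ ε`,

whence `|c_i| t^(i-k) ≤ ε^(1/i) ≤ ε^(1/n)`. The binomial weights of one coefficient add up to
`∑_{i ≥ k} binom(i,k) = binom(n+1,k+1) ≤ 2^(n+1)`. The term `c_0 A^n` is at most `ε` in size but
need not be controlled by `η`, so in (c) it belongs to the small part `e`, and `w` takes the rest of
the `A^n`-coefficient.
-/

open scoped MatrixGroups ENNReal

noncomputable section

namespace SymRep

/-- The variable `A`, standing for the basis vector `(1,0)` of `ℝ²`. -/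
abbrev A : MvPolynomial (Fin 2) ℝ := MvPolynomial.X 0

/-- The variable `B`, standing for the basis vector `(0,1)` of `ℝ²`. -/
abbrev B : MvPolynomial (Fin 2) ℝ := MvPolynomial.X 1

/-- `Sym^n(ℝ²)`: homogeneous polynomials of degree `n` in the two variables `A`, `B`. -/
abbrev Sym (n : ℕ) : Submodule ℝ (MvPolynomial (Fin 2) ℝ) :=
  MvPolynomial.homogeneousSubmodule (Fin 2) ℝ n

/-- Substitution by a matrix `g`: each basis vector is replaced by its image under `g`, that is
`A ↦ g₀₀ A + g₁₀ B` and `B ↦ g₀₁ A + g₁₁ B`. -/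
def subst (g : SL(2, ℝ)) : MvPolynomial (Fin 2) ℝ →ₐ[ℝ] MvPolynomial (Fin 2) ℝ :=
  MvPolynomial.aeval fun j => ∑ i : Fin 2, g i j • (MvPolynomial.X i : MvPolynomial (Fin 2) ℝ)

theorem subst_one : subst 1 = AlgHom.id ℝ _ := by
  apply MvPolynomial.algHom_ext
  intro j
  fin_cases j <;> simp [subst, Fin.sum_univ_two]

theorem subst_mul (g h : SL(2, ℝ)) : subst (g * h) = (subst g).comp (subst h) := by
  apply MvPolynomial.algHom_ext
  intro j
  simp only [subst, AlgHom.comp_apply, MvPolynomial.aeval_X, Fin.sum_univ_two, map_add, map_smul,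
    Matrix.SpecialLinearGroup.coe_mul, Matrix.mul_apply]
  module

theorem subst_mem {n : ℕ} (g : SL(2, ℝ)) {p : MvPolynomial (Fin 2) ℝ} (hp : p ∈ Sym n) :
    subst g p ∈ Sym n := by
  have h := MvPolynomial.IsHomogeneous.aeval (n := 1) hp
    (fun j => ∑ i : Fin 2, g i j • (MvPolynomial.X i : MvPolynomial (Fin 2) ℝ))
    (fun j => (MvPolynomial.homogeneousSubmodule (Fin 2) ℝ 1).sum_mem fun i _ =>
      Submodule.smul_mem _ _ (MvPolynomial.isHomogeneous_X ℝ i))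
  simpa [subst] using h

/-- The representation of `SL(2,ℝ)` on `Sym^n(ℝ²)`. -/
def rep (n : ℕ) : Representation ℝ SL(2, ℝ) (Sym n) where
  toFun g := (subst g).toLinearMap.restrict fun _ hp => subst_mem g hp
  map_one' := by
    ext1 p
    apply Subtype.ext
    simp [subst_one]
  map_mul' g h := by
    ext1 p
    apply Subtype.ext
    simp [subst_mul]
    rfl

/-- The unipotent element `[[1,t],[0,1]]`. -/
def u (t : ℝ) : SL(2, ℝ) := ⟨!![1, t; 0, 1], by simp [Matrix.det_fin_two]⟩

/-- The basis vector `A^(n-i) B^i` of `Sym^n(ℝ²)`, for `0 ≤ i ≤ n`. -/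
def basisVec (n : ℕ) (i : Fin (n + 1)) : Sym n :=
  ⟨A ^ (n - i : ℕ) * B ^ (i : ℕ), by
    have h := ((MvPolynomial.isHomogeneous_X ℝ (0 : Fin 2)).pow (n - i : ℕ)).mul
      ((MvPolynomial.isHomogeneous_X ℝ (1 : Fin 2)).pow (i : ℕ))
    have hi : 1 * (n - i : ℕ) + 1 * (i : ℕ) = n := by omega
    rwa [hi] at h⟩

/-- The vector `p(A,B) = ∑ c_i A^(n-i) B^i` of `Sym^n(ℝ²)`. -/
def vec {n : ℕ} (c : Fin (n + 1) → ℝ) : Sym n := ∑ i, c i • basisVec n i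

/-- The norm on `Sym^n(ℝ²)`: the largest absolute value of a coefficient of `A^(n-i) B^i`,
`0 ≤ i ≤ n`. -/
def symNorm {n : ℕ} (p : Sym n) : ℝ :=
  Finset.univ.sup' Finset.univ_nonempty fun i : Fin (n + 1) =>
    |MvPolynomial.coeff (Finsupp.single 0 (n - i : ℕ) + Finsupp.single 1 (i : ℕ)) p.1|

/-- `T = η / max_{1 ≤ i ≤ n} |c_i|^(1/i)`. For `η > 0` this is a positive real number unless
`c_1 = ⋯ = c_n = 0`, in which case it is `∞`. -/
def time {n : ℕ} (η : ℝ) (c : Fin (n + 1) → ℝ) : ℝ≥0∞ :=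
  ENNReal.ofReal η /
    Finset.univ.sup fun i : Fin n => ENNReal.ofReal (|c i.succ| ^ (1 / ((i : ℝ) + 1)))

end SymRep

end

namespace SymRep

section Coefficients

variable {R : Type*} {n : ℕ}

/-- The coefficients of the translate `p(A, B + tA)` of `p = ∑ c_i A^(n-i) B^i`: the entry at `k` is
the coefficient of `A^(n-k) B^k`. -/
def shiftCoeff [CommSemiring R] (t : R) (c : Fin (n + 1) → R) (k : Fin (n + 1)) : R :=
  ∑ i ∈ Finset.Ici k, ((i : ℕ).choose k : R) * c i * t ^ ((i : ℕ) - k)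

theorem shiftCoeff_zero [CommSemiring R] (t : R) (c : Fin (n + 1) → R) :
    shiftCoeff t c 0 = ∑ i, c i * t ^ (i : ℕ) := by
  have hIci : Finset.Ici (0 : Fin (n + 1)) = Finset.univ := Finset.Ici_bot
  simp [shiftCoeff, hIci]

theorem shiftCoeff_update_zero_zero [CommRing R] (t : R) (c : Fin (n + 1) → R) :
    shiftCoeff t (Function.update c 0 0) 0 = shiftCoeff t c 0 - c 0 := by
  simp [shiftCoeff_zero, Fin.sum_univ_succ]

theorem sum_Ici_choose (k : Fin (n + 1)) :
    ∑ i ∈ Finset.Ici k, (i : ℕ).choose k = (n + 1).choose (k + 1) := by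
  have hmap : (Finset.Ici k).map Fin.valEmbedding = Finset.Icc (k : ℕ) n :=
    Fin.map_valEmbedding_Ici k
  rw [← Nat.sum_Icc_choose, ← hmap, Finset.sum_map]
  rfl

theorem abs_shiftCoeff_le [CommRing R] [LinearOrder R] [IsStrictOrderedRing R] {t M : R}
    {c : Fin (n + 1) → R} {k : Fin (n + 1)} (h : ∀ i ≥ k, |c i * t ^ ((i : ℕ) - k)| ≤ M) :
    |shiftCoeff t c k| ≤ 2 ^ (n + 1) * M := by
  have hM : 0 ≤ M := (abs_nonneg _).trans (h k le_rfl)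
  calc |shiftCoeff t c k|
      ≤ ∑ i ∈ Finset.Ici k, |((i : ℕ).choose k : R) * c i * t ^ ((i : ℕ) - k)| :=
        Finset.abs_sum_le_sum_abs _ _
    _ ≤ ∑ i ∈ Finset.Ici k, ((i : ℕ).choose k : R) * M := by
        refine Finset.sum_le_sum fun i hi => ?_
        rw [mul_assoc, abs_mul, Nat.abs_cast]
        exact mul_le_mul_of_nonneg_left (h i (Finset.mem_Ici.mp hi)) (Nat.cast_nonneg _)
    _ = ((n + 1).choose (k + 1) : ℕ) * M := by
        rw [← Finset.sum_mul, ← sum_Ici_choose, Nat.cast_sum]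
    _ ≤ 2 ^ (n + 1) * M := by
        gcongr
        exact_mod_cast Nat.choose_le_two_pow (n + 1) (k + 1)

end Coefficients

section Representation

variable {n : ℕ}

theorem subst_u_A (t : ℝ) : subst (u t) A = A := by
  simp [subst, u, Fin.sum_univ_two]

theorem subst_u_B (t : ℝ) : subst (u t) B = B + t • A := by
  simp [subst, u, Fin.sum_univ_two, add_comm]

theorem rep_u_basisVec (t : ℝ) (i : Fin (n + 1)) :
    rep n (u t) (basisVec n i) =
      ∑ k ∈ Finset.Iic i, (((i : ℕ).choose k : ℝ) * t ^ ((i : ℕ) - k)) • basisVec n k := by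
  apply Subtype.ext
  have hrep : (rep n (u t) (basisVec n i)).1 = A ^ (n - i : ℕ) * (B + t • A) ^ (i : ℕ) := by
    change subst (u t) (A ^ (n - i : ℕ) * B ^ (i : ℕ)) = _
    rw [map_mul, map_pow, map_pow, subst_u_A, subst_u_B]
  rw [hrep, add_pow, Nat.range_succ_eq_Iic, Finset.mul_sum, ← Fin.map_valEmbedding_Iic,
    Finset.sum_map, AddSubmonoidClass.coe_finsetSum]
  refine Finset.sum_congr rfl fun k hk => ?_
  have hki : (k : ℕ) ≤ i := Fin.le_def.mp (Finset.mem_Iic.mp hk)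
  have hexp : (n - k : ℕ) = (n - i) + (i - k) := by omega
  simp only [Fin.valEmbedding_apply, basisVec, Submodule.coe_smul, MvPolynomial.smul_eq_C_mul,
    map_mul, map_pow, map_natCast, hexp, pow_add, mul_pow]
  ring

theorem rep_u_vec (t : ℝ) (c : Fin (n + 1) → ℝ) :
    rep n (u t) (vec c) = vec (shiftCoeff t c) := by
  simp only [vec, shiftCoeff, map_sum, map_smul, rep_u_basisVec, Finset.smul_sum, Finset.sum_smul]
  rw [Finset.sum_comm' (t' := Finset.univ) (s' := Finset.Ici) (by simp)]
  refine Finset.sum_congr rfl fun k _ => Finset.sum_congr rfl fun i _ => ?_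
  rw [smul_smul, mul_left_comm, mul_assoc]

theorem rep_u_of_mem_span_basisVec_zero {w : Sym n} (hw : w ∈ Submodule.span ℝ {basisVec n 0})
    (s : ℝ) : rep n (u s) w = w := by
  obtain ⟨a, rfl⟩ := Submodule.mem_span_singleton.mp hw
  have hIic : Finset.Iic (0 : Fin (n + 1)) = {0} := Finset.Iic_bot
  simp [rep_u_basisVec, hIic]

theorem vec_add (a b : Fin (n + 1) → ℝ) : vec (a + b) = vec a + vec b := by
  simp [vec, add_smul, Finset.sum_add_distrib]

theorem vec_single (i : Fin (n + 1)) (a : ℝ) : vec (Pi.single i a) = a • basisVec n i := by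
  simp [vec, Pi.single_apply]

theorem rep_u_vec_eq_smul_add_vec_update (t : ℝ) (c : Fin (n + 1) → ℝ) :
    rep n (u t) (vec c) =
      (shiftCoeff t c 0 - c 0) • basisVec n 0 + vec (Function.update (shiftCoeff t c) 0 (c 0)) := by
  rw [rep_u_vec, ← vec_single, ← vec_add]
  congr 1
  ext k
  by_cases hk : k = 0 <;> simp [hk]

theorem coeff_basisVec (i j : Fin (n + 1)) :
    MvPolynomial.coeff (Finsupp.single 0 (n - j : ℕ) + Finsupp.single 1 (j : ℕ))
      (basisVec n i).1 = if i = j then 1 else 0 := by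
  have hmonomial : (basisVec n i).1 = MvPolynomial.monomial
      (Finsupp.single 0 (n - i : ℕ) + Finsupp.single 1 (i : ℕ)) (1 : ℝ) := by
    simp [basisVec, MvPolynomial.X_pow_eq_monomial, MvPolynomial.monomial_mul]
  rw [hmonomial, MvPolynomial.coeff_monomial]
  refine if_congr ⟨fun h => Fin.ext ?_, fun h => by rw [h]⟩ rfl rfl
  simpa using DFunLike.congr_fun h 1

theorem coeff_vec (b : Fin (n + 1) → ℝ) (j : Fin (n + 1)) :
    MvPolynomial.coeff (Finsupp.single 0 (n - j : ℕ) + Finsupp.single 1 (j : ℕ))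
      (vec b).1 = b j := by
  rw [vec, AddSubmonoidClass.coe_finsetSum, MvPolynomial.coeff_sum]
  simp only [Submodule.coe_smul, MvPolynomial.coeff_smul, coeff_basisVec, smul_eq_mul, mul_ite,
    mul_one, mul_zero, Finset.sum_ite_eq', Finset.mem_univ, if_true]

theorem symNorm_vec_le_iff {b : Fin (n + 1) → ℝ} {M : ℝ} :
    symNorm (vec b) ≤ M ↔ ∀ i, |b i| ≤ M := by
  simp only [symNorm, Finset.sup'_le_iff, coeff_vec, Finset.mem_univ, true_implies]

theorem symNorm_smul_basisVec (a : ℝ) (i : Fin (n + 1)) : symNorm (a • basisVec n i) = |a| := by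
  rw [← vec_single]
  apply le_antisymm
  · refine symNorm_vec_le_iff.mpr fun j => ?_
    by_cases hj : j = i <;> simp [hj]
  · simpa using symNorm_vec_le_iff.mp (le_refl (symNorm (vec (Pi.single i a)))) i

end Representation

section TimeScale

theorem rpow_one_div_mul_le_iff {a t η : ℝ} {m : ℕ} (ha : 0 ≤ a) (ht : 0 ≤ t) (hη : 0 ≤ η)
    (hm : m ≠ 0) : a ^ (1 / (m : ℝ)) * t ≤ η ↔ a * t ^ m ≤ η ^ m := by
  rw [← pow_le_pow_iff_left₀ (by positivity) hη hm, mul_pow, one_div,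
    Real.rpow_inv_natCast_pow ha hm]

theorem ofReal_le_time_iff {n : ℕ} {η t : ℝ} {c : Fin (n + 1) → ℝ} (hη : 0 < η) (ht : 0 ≤ t) :
    ENNReal.ofReal t ≤ time η c ↔ ∀ i ≠ 0, |c i| * t ^ (i : ℕ) ≤ η ^ (i : ℕ) := by
  have hη_ne : ENNReal.ofReal η ≠ 0 := (ENNReal.ofReal_pos.mpr hη).ne'
  have hle_div (x y : ℝ≥0∞) : x ≤ ENNReal.ofReal η / y ↔ x * y ≤ ENNReal.ofReal η :=
    ENNReal.le_div_iff_mul_le (.inr hη_ne) (.inr ENNReal.ofReal_ne_top)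
  rw [time, hle_div, mul_comm, ← hle_div, Finset.sup_le_iff, Fin.forall_fin_succ]
  simp only [Finset.mem_univ, ne_eq, not_true_eq_false, false_implies, true_and, true_implies,
    Fin.succ_ne_zero, not_false_eq_true]
  refine forall_congr' fun i => ?_
  rw [hle_div, ← ENNReal.ofReal_mul (by positivity), ENNReal.ofReal_le_ofReal_iff hη.le,
    Fin.val_succ, ← rpow_one_div_mul_le_iff (abs_nonneg _) ht hη.le i.val.succ_ne_zero,
    Nat.cast_succ]

end TimeScale

section Estimates

theorem mul_pow_sub_pow_le {R : Type*} [CommSemiring R] [PartialOrder R] [IsOrderedRing R]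
    {a t : R} {k m : ℕ} (ha : 0 ≤ a) (ht : 0 ≤ t) (hkm : k ≤ m) (h : a * t ^ m ≤ 1) :
    (a * t ^ (m - k)) ^ m ≤ a ^ k := by
  obtain ⟨j, rfl⟩ := Nat.exists_eq_add_of_le hkm
  have hinterpolate : (a * t ^ (k + j - k)) ^ (k + j) = a ^ k * (a * t ^ (k + j)) ^ j := by
    rw [Nat.add_sub_cancel_left]
    ring
  rw [hinterpolate]
  exact mul_le_of_le_one_right (pow_nonneg ha k) (pow_le_one₀ (by positivity) h)

theorem mul_pow_sub_le_rpow {a ε t : ℝ} {k m n : ℕ} (ha : 0 ≤ a) (haε : a ≤ ε) (hε : ε ≤ 1)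
    (ht : 0 ≤ t) (hk : k ≠ 0) (hkm : k ≤ m) (hmn : m ≤ n) (h : a * t ^ m ≤ 1) :
    a * t ^ (m - k) ≤ ε ^ (1 / (n : ℝ)) := by
  have hx : 0 ≤ a * t ^ (m - k) := by positivity
  have hpow_m : (a * t ^ (m - k)) ^ m ≤ ε :=
    (mul_pow_sub_pow_le ha ht hkm h).trans ((pow_le_of_le_one ha (haε.trans hε) hk).trans haε)
  have hx_one : a * t ^ (m - k) ≤ 1 :=
    (pow_le_one_iff_of_nonneg hx (by omega)).mp (hpow_m.trans hε)
  have hpow_n : (a * t ^ (m - k)) ^ n ≤ ε := (pow_le_pow_of_le_one hx hx_one hmn).trans hpow_m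
  calc a * t ^ (m - k) = ((a * t ^ (m - k)) ^ n) ^ (1 / (n : ℝ)) := by
        rw [one_div, Real.pow_rpow_inv_natCast hx (by omega)]
    _ ≤ ε ^ (1 / (n : ℝ)) := by gcongr

variable {n : ℕ} {ε η t : ℝ} {c : Fin (n + 1) → ℝ}

theorem abs_shiftCoeff_le_rpow (hε : ε ≤ 1) (hc : ∀ i, |c i| ≤ ε) (ht : 0 ≤ t)
    (hT : ∀ i ≠ 0, |c i| * t ^ (i : ℕ) ≤ 1) {k : Fin (n + 1)} (hk : k ≠ 0) :
    |shiftCoeff t c k| ≤ 2 ^ (n + 1) * ε ^ (1 / (n : ℝ)) := by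
  refine abs_shiftCoeff_le fun i hki => ?_
  rw [abs_mul, abs_of_nonneg (pow_nonneg ht _)]
  exact mul_pow_sub_le_rpow (abs_nonneg _) (hc i) hε ht (Fin.val_ne_zero_iff.mpr hk) hki i.is_le
    (hT i (ne_bot_of_le_ne_bot hk hki))

theorem abs_shiftCoeff_zero_sub_le (hη : 0 ≤ η) (ht : 0 ≤ t)
    (hT : ∀ i ≠ 0, |c i| * t ^ (i : ℕ) ≤ η) :
    |shiftCoeff t c 0 - c 0| ≤ 2 ^ (n + 1) * η := by
  rw [← shiftCoeff_update_zero_zero]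
  refine abs_shiftCoeff_le fun i _ => ?_
  by_cases hi : i = 0
  · simpa [hi] using hη
  · simpa [hi, abs_mul, abs_of_nonneg ht] using hT i hi

theorem abs_shiftCoeff_zero_le (h₀ : |c 0| ≤ η) (ht : 0 ≤ t)
    (hT : ∀ i ≠ 0, |c i| * t ^ (i : ℕ) ≤ η) :
    |shiftCoeff t c 0| ≤ 2 ^ (n + 1) * η := by
  refine abs_shiftCoeff_le fun i _ => ?_
  by_cases hi : i = 0
  · simpa [hi] using h₀
  · simpa [abs_mul, abs_of_nonneg ht] using hT i hi

theorem symNorm_vec_update_shiftCoeff_le (hε : ε ≤ 1) (hc : ∀ i, |c i| ≤ ε) (ht : 0 ≤ t)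
    (hT : ∀ i ≠ 0, |c i| * t ^ (i : ℕ) ≤ 1) :
    symNorm (vec (Function.update (shiftCoeff t c) 0 (c 0))) ≤
      2 ^ (n + 1) * ε ^ (1 / (n : ℝ)) := by
  have hε₀ : 0 ≤ ε := (abs_nonneg _).trans (hc 0)
  rw [symNorm_vec_le_iff, Function.forall_update_iff _ fun _ x => |x| ≤ _]
  refine ⟨?_, fun k hk => abs_shiftCoeff_le_rpow hε hc ht hT hk⟩
  calc |c 0| ≤ ε := hc 0
    _ ≤ ε ^ (1 / (n : ℝ)) := by
        rw [one_div]
        exact Real.self_le_rpow_of_le_one hε₀ hε (Nat.cast_inv_le_one n)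
    _ ≤ 2 ^ (n + 1) * ε ^ (1 / (n : ℝ)) :=
        le_mul_of_one_le_left (by positivity) (one_le_pow₀ one_le_two)

end Estimates

end SymRep

theorem sym_rep_divergence_estimate (n : ℕ) (hn : 1 ≤ n) :
    ∃ C : ℝ, 0 < C ∧ ∀ ε ∈ Set.Ioo (0 : ℝ) 1, ∀ η ∈ Set.Ioo (0 : ℝ) 1,
      ∀ c : Fin (n + 1) → ℝ, (∀ i, |c i| ≤ ε) →
      ∀ t : ℝ, 0 ≤ t → ENNReal.ofReal t ≤ SymRep.time η c →
        -- the image vector has the coefficients estimated in (a) and (b)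
        (SymRep.rep n (SymRep.u t) (SymRep.vec c) =
          SymRep.vec fun k => ∑ i ∈ Finset.Ici k,
            ((i : ℕ).choose k : ℝ) * c i * t ^ ((i : ℕ) - k)) ∧
        -- (a)
        (ε ≤ η → |∑ i, c i * t ^ (i : ℕ)| ≤ C * η) ∧
        -- (b)
        (∀ k : Fin (n + 1), 1 ≤ (k : ℕ) →
          |∑ i ∈ Finset.Ici k, ((i : ℕ).choose k : ℝ) * c i * t ^ ((i : ℕ) - k)| ≤
            C * ε ^ (1 / (n : ℝ))) ∧
        -- (c)
        (∃ w e : SymRep.Sym n,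
          SymRep.rep n (SymRep.u t) (SymRep.vec c) = w + e ∧
          w ∈ Submodule.span ℝ {SymRep.basisVec n 0} ∧
          (∀ s : ℝ, SymRep.rep n (SymRep.u s) w = w) ∧
          SymRep.symNorm w ≤ C * η ∧
          SymRep.symNorm e ≤ C * ε ^ (1 / (n : ℝ))) := by
  refine ⟨2 ^ (n + 1), by positivity, ?_⟩
  rintro ε ⟨-, hε⟩ η ⟨hη₀, hη₁⟩ c hc t ht htime
  have hT_η : ∀ i ≠ 0, |c i| * t ^ (i : ℕ) ≤ η := fun i hi =>
    ((SymRep.ofReal_le_time_iff hη₀ ht).mp htime i hi).trans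
      (pow_le_of_le_one hη₀.le hη₁.le (Fin.val_ne_zero_iff.mpr hi))
  have hT_one : ∀ i ≠ 0, |c i| * t ^ (i : ℕ) ≤ 1 := fun i hi => (hT_η i hi).trans hη₁.le
  have hw : (SymRep.shiftCoeff t c 0 - c 0) • SymRep.basisVec n 0 ∈
      Submodule.span ℝ {SymRep.basisVec n 0} :=
    Submodule.smul_mem _ _ (Submodule.mem_span_singleton_self _)
  refine ⟨SymRep.rep_u_vec t c, fun hεη => ?_, fun k hk => ?_,
    _, _, SymRep.rep_u_vec_eq_smul_add_vec_update t c, hw,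
    SymRep.rep_u_of_mem_span_basisVec_zero hw, ?_,
    SymRep.symNorm_vec_update_shiftCoeff_le hε.le hc ht hT_one⟩
  · rw [← SymRep.shiftCoeff_zero]
    exact SymRep.abs_shiftCoeff_zero_le ((hc 0).trans hεη) ht hT_η
  · exact SymRep.abs_shiftCoeff_le_rpow hε.le hc ht hT_one
      (Fin.val_ne_zero_iff.mp (Nat.one_le_iff_ne_zero.mp hk))
  · rw [SymRep.symNorm_smul_basisVec]
    exact SymRep.abs_shiftCoeff_zero_sub_le hη₀.le ht hT_η
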